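/- Let n ≥ 3 be odd and let v = n(n+1)k' + 2(n+1) for a non-negative integer k'. Then a (K_2,K_{1,n})-URD(v;1,s) exists, where s = (v−2)(n+1)/(2n). -/

import Mathlib

/-- The edge set of the star with center `p.1` and leaf set `p.2`. -/
def starEdgeSet {V : Type*} [DecidableEq V] (p : V × Finset V) : Finset (Sym2 V) :=
  p.2.image (fun l => s(p.1, l))

/-- `P` is a family of vertex-disjoint `n`-stars (each given by a center and a set of
`n` leaves) whose vertex sets partition the whole vertex set. -/
def IsStarFactorFamily {V : Type*} [Fintype V] [DecidableEq V] (n : ℕ)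
    (P : Finset (V × Finset V)) : Prop :=
  (∀ p ∈ P, p.2.card = n ∧ p.1 ∉ p.2) ∧
  (∀ x : V, ∃! p, p ∈ P ∧ (x = p.1 ∨ x ∈ p.2))

/-- `E` is the edge set of a `K_{1,n}`-factor of the complete graph on `V`. -/
def IsStarFactor {V : Type*} [Fintype V] [DecidableEq V] (n : ℕ)
    (E : Finset (Sym2 V)) : Prop :=
  ∃ P : Finset (V × Finset V), IsStarFactorFamily n P ∧ E = P.biUnion starEdgeSet

/-- `E` is the edge set of a perfect matching (a `1`-factor, i.e. a `K_2`-factor). -/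
def IsOneFactor {V : Type*} [Fintype V] [DecidableEq V] (E : Finset (Sym2 V)) : Prop :=
  (∀ e ∈ E, ¬ e.IsDiag) ∧ ∀ x : V, ∃! e, e ∈ E ∧ x ∈ e

/-- A `(K_2, K_{1,n})`-URD`(v; r, s)`: a partition of the edge set of the complete graph
`K_v` into `r` classes that are `1`-factors and `s` classes that are `K_{1,n}`-factors. -/
def IsURD (n v r s : ℕ) : Prop :=
  ∃ (M : Fin r → Finset (Sym2 (Fin v))) (F : Fin s → Finset (Sym2 (Fin v))),
    (∀ i, IsOneFactor (M i)) ∧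
    (∀ j, IsStarFactor n (F j)) ∧
    (∀ i j, i ≠ j → Disjoint (M i) (M j)) ∧
    (∀ i j, i ≠ j → Disjoint (F i) (F j)) ∧
    (∀ i j, Disjoint (M i) (F j)) ∧
    (∀ e : Sym2 (Fin v),
      (e ∈ Finset.univ.biUnion M ∪ Finset.univ.biUnion F) ↔ ¬ e.IsDiag)

/-- the vertex map of a star system -/
def stMap {S V : Type} {n : ℕ} (c : S → V) (l : S → Fin n → V) : S × Option (Fin n) → V :=
  fun p => p.2.elim (c p.1) (l p.1)

lemma isOneFactor_of {V : Type} [Fintype V] [DecidableEq V] (μ : V → V)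
    (h1 : ∀ x, μ (μ x) = x) (h2 : ∀ x, μ x ≠ x) :
    IsOneFactor ((Finset.univ : Finset V).image (fun x => s(x, μ x))) := by
  refine ⟨?_, ?_⟩
  · intro e he
    simp only [Finset.mem_image, Finset.mem_univ, true_and] at he
    obtain ⟨x, rfl⟩ := he
    simpa using (h2 x).symm
  · intro x
    refine ⟨s(x, μ x), ⟨Finset.mem_image_of_mem _ (Finset.mem_univ x), by simp⟩, ?_⟩
    rintro e ⟨he, hx⟩
    simp only [Finset.mem_image, Finset.mem_univ, true_and] at he
    obtain ⟨y, rfl⟩ := he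
    rw [Sym2.mem_iff] at hx
    rcases hx with rfl | rfl
    · rfl
    · rw [h1]; exact Sym2.eq_swap

lemma isStarFactor_of {V S : Type} [Fintype V] [DecidableEq V] [Fintype S] {n : ℕ}
    (c : S → V) (l : S → Fin n → V) (hb : Function.Bijective (stMap c l)) :
    IsStarFactor n ((Finset.univ : Finset (S × Fin n)).image (fun p => s(c p.1, l p.1 p.2))) := by
  have hll : ∀ a b i j, l a i = l b j → a = b ∧ i = j := by
    intro a b i j h
    have := @hb.1 (a, some i) (b, some j) h
    simpa using this
  have hcc : ∀ a b, c a = c b → a = b := by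
    intro a b h
    have := @hb.1 (a, none) (b, none) h
    simpa using this
  have hcl : ∀ a b i, c a ≠ l b i := by
    intro a b i h
    have := @hb.1 (a, none) (b, some i) h
    simp at this
  refine ⟨(Finset.univ : Finset S).image (fun a => (c a, Finset.univ.image (l a))), ⟨?_, ?_⟩, ?_⟩
  · intro p hp
    simp only [Finset.mem_image, Finset.mem_univ, true_and] at hp
    obtain ⟨a, rfl⟩ := hp
    refine ⟨?_, ?_⟩
    · rw [Finset.card_image_of_injective _ (fun i j h => (hll a a i j h).2)]; simp
    · simp only [Finset.mem_image, Finset.mem_univ, true_and, not_exists]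
      exact fun i h => hcl a a i h.symm
  · intro x
    obtain ⟨⟨a, o⟩, ha⟩ := hb.2 x
    refine ⟨(c a, Finset.univ.image (l a)),
      ⟨Finset.mem_image_of_mem (fun a => (c a, Finset.univ.image (l a))) (Finset.mem_univ a), ?_⟩, ?_⟩
    · cases o with
      | none => left; exact ha.symm
      | some i => right; simp only [Finset.mem_image, Finset.mem_univ, true_and]; exact ⟨i, ha⟩
    · rintro p ⟨hp, hx⟩
      simp only [Finset.mem_image, Finset.mem_univ, true_and] at hp
      obtain ⟨b, rfl⟩ := hp
      suffices b = a by rw [this]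
      rcases hx with hx | hx
      · have := @hb.1 (a, o) (b, none) (by rw [ha, hx]; rfl)
        simp at this; exact this.1.symm
      · simp only [Finset.mem_image, Finset.mem_univ, true_and] at hx
        obtain ⟨i, hi⟩ := hx
        have := @hb.1 (a, o) (b, some i) (by rw [ha, ← hi]; rfl)
        simp at this; exact this.1.symm
  · ext e
    simp only [starEdgeSet, Finset.mem_image, Finset.mem_univ, true_and, Finset.mem_biUnion,
      Prod.exists]
    constructor
    · rintro ⟨a, i, rfl⟩
      exact ⟨_, _, ⟨a, rfl⟩, l a i, by simp, rfl⟩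
    · rintro ⟨_, _, ⟨a, h⟩, x, hx, rfl⟩
      simp only [Prod.mk.injEq] at h
      obtain ⟨rfl, rfl⟩ := h
      simp only [Finset.mem_image, Finset.mem_univ, true_and] at hx
      obtain ⟨i, rfl⟩ := hx
      exact ⟨a, i, rfl⟩

lemma urd_core (n v s : ℕ) (hv : 2 ≤ v)
    (hcount : 2 * n * s = (v - 2) * (n + 1))
    (μ : Fin v → Fin v) (h1 : ∀ x, μ (μ x) = x) (h2 : ∀ x, μ x ≠ x)
    (S : Fin s → Type) [∀ i, Fintype (S i)]
    (c : ∀ i, S i → Fin v) (l : ∀ i, S i → Fin n → Fin v)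
    (hS : ∀ i, Fintype.card (S i) * (n + 1) = v)
    (hsurj : ∀ i, Function.Surjective (stMap (c i) (l i)))
    (hcov : ∀ x y, x ≠ y → μ x = y ∨ ∃ i a t, (c i a = x ∧ l i a t = y) ∨
      (c i a = y ∧ l i a t = x)) : IsURD n v 1 s := by
  have hb : ∀ i, Function.Bijective (stMap (c i) (l i)) := by
    intro i
    rw [Fintype.bijective_iff_surjective_and_card]
    exact ⟨hsurj i, by simp [hS i]⟩
  have hcl : ∀ i a b t, c i a ≠ l i b t := by
    intro i a b t h
    have := @(hb i).1 (a, none) (b, some t) h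
    simp at this
  let T := Fin v ⊕ (Σ i : Fin s, S i × Fin n × Bool)
  let O := {p : Fin v × Fin v // p.1 ≠ p.2}
  let g : T → O := fun t => match t with
    | Sum.inl x => ⟨(x, μ x), (h2 x).symm⟩
    | Sum.inr ⟨i, a, t, true⟩ => ⟨(c i a, l i a t), hcl i a a t⟩
    | Sum.inr ⟨i, a, t, false⟩ => ⟨(l i a t, c i a), (hcl i a a t).symm⟩
  have hgs : Function.Surjective g := by
    rintro ⟨⟨x, y⟩, hxy⟩
    rcases hcov x y hxy with h | ⟨i, a, t, h | h⟩
    · exact ⟨Sum.inl x, by subst h; rfl⟩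
    · obtain ⟨rfl, rfl⟩ := h
      exact ⟨Sum.inr ⟨i, a, t, true⟩, rfl⟩
    · obtain ⟨rfl, rfl⟩ := h
      exact ⟨Sum.inr ⟨i, a, t, false⟩, rfl⟩
  have hcO : Fintype.card O = v * v - v := by
    have := Finset.offDiag_card (Finset.univ : Finset (Fin v))
    simp only [Finset.card_univ, Fintype.card_fin] at this
    rw [← this, Fintype.card_subtype]
    congr 1
    ext p; simp [Finset.mem_offDiag]
  have hcT : Fintype.card T = v * v - v := by
    have e1 : (n + 1) * Fintype.card T = (n + 1) * (v * v - v) := by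
      simp only [T, Fintype.card_sum, Fintype.card_fin, Fintype.card_sigma, Fintype.card_prod,
        Fintype.card_bool]
      rw [mul_add, Finset.mul_sum]
      have : ∀ i ∈ (Finset.univ : Finset (Fin s)), (n+1) * (Fintype.card (S i) * (n * 2)) = v * (n * 2) := by
        intro i _
        rw [← hS i]; ring
      rw [Finset.sum_congr rfl this]
      simp only [Finset.sum_const, Finset.card_univ, Fintype.card_fin, smul_eq_mul]
      have : s * (v * (n*2)) = v * (2 * n * s) := by ring
      rw [this, hcount]
      obtain ⟨u, rfl⟩ := Nat.exists_eq_add_of_le hv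
      have : (2 + u) * (2 + u) - (2 + u) = (2+u) * (1 + u) := by
        rw [Nat.sub_eq_iff_eq_add (by nlinarith)]; ring
      rw [this]
      simp only [Nat.add_sub_cancel_left]
      ring
    exact Nat.eq_of_mul_eq_mul_left (Nat.succ_pos n) e1
  have hgi : Function.Injective g := by
    have : Function.Bijective g := by
      rw [Fintype.bijective_iff_surjective_and_card]
      exact ⟨hgs, by rw [hcO, hcT]⟩
    exact this.1
  refine ⟨fun _ => Finset.univ.image (fun x => s(x, μ x)),
    fun i => (Finset.univ : Finset (S i × Fin n)).image (fun p => s(c i p.1, l i p.1 p.2)),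
    fun _ => isOneFactor_of μ h1 h2, fun i => isStarFactor_of _ _ (hb i), ?_, ?_, ?_, ?_⟩
  · intro i j h; exact absurd (Subsingleton.elim i j) h
  · intro i j hij
    rw [Finset.disjoint_left]
    intro e he he'
    simp only [Finset.mem_image, Finset.mem_univ, true_and, Prod.exists] at he he'
    obtain ⟨a, t, rfl⟩ := he
    obtain ⟨b, t', h⟩ := he'
    rw [Sym2.eq_iff] at h
    rcases h with ⟨ha, hb⟩ | ⟨ha, hb⟩
    · have := @hgi (Sum.inr ⟨j, b, t', true⟩) (Sum.inr ⟨i, a, t, true⟩)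
        (Subtype.ext (Prod.ext ha hb))
      exact hij (congrArg Sigma.fst (Sum.inr.inj this)).symm
    · have := @hgi (Sum.inr ⟨j, b, t', true⟩) (Sum.inr ⟨i, a, t, false⟩)
        (Subtype.ext (Prod.ext ha hb))
      exact hij (congrArg Sigma.fst (Sum.inr.inj this)).symm
  · intro _ i
    rw [Finset.disjoint_left]
    intro e he he'
    simp only [Finset.mem_image, Finset.mem_univ, true_and, Prod.exists] at he he'
    obtain ⟨x, rfl⟩ := he
    obtain ⟨b, t', h⟩ := he'
    rw [Sym2.eq_iff] at h
    rcases h with ⟨ha, hb⟩ | ⟨ha, hb⟩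
    · have := @hgi (Sum.inr ⟨i, b, t', true⟩) (Sum.inl x)
        (Subtype.ext (Prod.ext ha hb))
      exact Sum.inr_ne_inl this
    · have := @hgi (Sum.inr ⟨i, b, t', false⟩) (Sum.inl x)
        (Subtype.ext (Prod.ext hb ha))
      exact Sum.inr_ne_inl this
  · intro e
    simp only [Finset.mem_union, Finset.mem_biUnion, Finset.mem_image, Finset.mem_univ, true_and,
      Prod.exists]
    induction e using Sym2.ind with
    | _ x y =>
    constructor
    · rintro (⟨_, z, hz⟩ | ⟨i, a, t, h⟩)
      · rw [← hz]; simpa using (h2 z).symm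
      · rw [← h]; simpa using hcl i a a t
    · intro h
      have hxy : x ≠ y := by simpa using h
      rcases hcov x y hxy with h | ⟨i, a, t, h | h⟩
      · exact Or.inl ⟨0, x, by rw [h]⟩
      · exact Or.inr ⟨i, a, t, by rw [h.1, h.2]⟩
      · exact Or.inr ⟨i, a, t, by rw [h.1, h.2]; exact Sym2.eq_swap⟩

lemma urd_of {V I : Type} [Fintype V] [Fintype I] (n v s : ℕ) (hv : 2 ≤ v)
    (hV : Fintype.card V = v) (hI : Fintype.card I = s)
    (hcount : 2 * n * s = (v - 2) * (n + 1))
    (μ : V → V) (h1 : ∀ x, μ (μ x) = x) (h2 : ∀ x, μ x ≠ x)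
    (S : I → Type) [∀ i, Fintype (S i)]
    (c : ∀ i, S i → V) (l : ∀ i, S i → Fin n → V)
    (hS : ∀ i, Fintype.card (S i) * (n + 1) = v)
    (hsurj : ∀ i, Function.Surjective (stMap (c i) (l i)))
    (hcov : ∀ x y, x ≠ y → μ x = y ∨ ∃ i a t, (c i a = x ∧ l i a t = y) ∨
      (c i a = y ∧ l i a t = x)) : IsURD n v 1 s := by
  let e := Fintype.equivFinOfCardEq hV
  let f := Fintype.equivFinOfCardEq hI
  refine urd_core n v s hv hcount (fun x => e (μ (e.symm x))) (by simp [h1]) ?_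
    (fun i => S (f.symm i)) (fun i a => e (c _ a)) (fun i a t => e (l _ a t))
    (fun i => hS _) ?_ ?_
  · intro x h
    apply h2 (e.symm x)
    apply e.injective
    simpa using h
  · intro i x
    obtain ⟨⟨a, o⟩, h⟩ := hsurj (f.symm i) (e.symm x)
    refine ⟨⟨a, o⟩, ?_⟩
    cases o with
    | none => simp only [stMap, Option.elim] at h ⊢; rw [h]; simp
    | some t => simp only [stMap, Option.elim] at h ⊢; rw [h]; simp
  · intro x y hxy
    rcases hcov (e.symm x) (e.symm y) (by simpa using hxy) with h | ⟨i, a, t, h⟩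
    · left; simp [h]
    · right
      obtain ⟨i, rfl⟩ := f.symm.surjective i
      refine ⟨i, a, t, ?_⟩
      rcases h with h | h
      · left; simp [h.1, h.2]
      · right; simp [h.1, h.2]

lemma enum_finset {G : Type} [Inhabited G] (T : Finset G) :
    ∃ f : ℕ → G, ∀ δ ∈ T, ∃ k, k < T.card ∧ f k = δ := by
  classical
  refine ⟨fun k => if h : k < T.card then (T.equivFin.symm ⟨k, h⟩ : G) else default, ?_⟩
  intro δ hδ
  refine ⟨T.equivFin ⟨δ, hδ⟩, (T.equivFin ⟨δ, hδ⟩).2, ?_⟩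
  simp

/-- difference `δ` from row `i` to row `j` used by the base factor -/
def usedD {R G St0 : Type} [AddCommGroup G] {n : ℕ} (c0 : St0 → R × G)
    (l0 : St0 → Fin n → R × G) (i j : R) (δ : G) : Prop :=
  ∃ st t y, (c0 st = (i, y) ∧ l0 st t = (j, y + δ)) ∨ (c0 st = (j, y + δ) ∧ l0 st t = (i, y))

lemma urd_group {G : Type} [AddCommGroup G] [Fintype G] [DecidableEq G] (n v s : ℕ) (hv : 2 ≤ v)
    (hvw : v = (n + 1) * Fintype.card G)
    (hcount : 2 * n * s = (v - 2) * (n + 1))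
    {St0 : Type} [Fintype St0]
    (c0 : St0 → Fin (n + 1) × G) (l0 : St0 → Fin n → Fin (n + 1) × G)
    (hcard : Fintype.card St0 = Fintype.card G)
    (hsurj : Function.Surjective (stMap c0 l0))
    (x : Fin (n + 1) → ℕ) (hs : s = Fintype.card G + ∑ i, x i)
    (ρ : Fin (n + 1) → Fin (n + 1)) (hρ : ∀ i, ρ (ρ i) = i)
    (κ0 : G) (hκ : κ0 + κ0 = 0) (hκ' : ∀ i, ρ i = i → κ0 ≠ 0)
    (hpure : ∀ i δ, δ ≠ 0 → usedD c0 l0 i i δ ∨ (ρ i = i ∧ δ = κ0))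
    (hmix : ∀ i j, i < j → ∃ U : Finset G, (∀ δ ∈ U, usedD c0 l0 i j δ) ∧
      Fintype.card G ≤ x i + x j + (if ρ i = j then 1 else 0) + U.card) :
    IsURD n v 1 s := by
  classical
  have hsel : ∀ i j : Fin (n + 1), ∃ (a b : ℕ → G) (cc : G), i < j → ∀ δ : G,
      usedD c0 l0 i j δ ∨ (∃ t, t < x i ∧ a t = δ) ∨ (∃ t, t < x j ∧ b t = δ) ∨
        (ρ i = j ∧ cc = δ) := by
    intro i j
    by_cases hij : i < j
    · obtain ⟨U, hU, hc⟩ := hmix i j hij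
      have : Inhabited G := ⟨0⟩
      obtain ⟨f, hf⟩ := enum_finset Uᶜ
      have hcU : Uᶜ.card ≤ x i + x j + (if ρ i = j then 1 else 0) := by
        rw [Finset.card_compl]; omega
      refine ⟨f, fun t => f (x i + t), f (x i + x j), fun _ δ => ?_⟩
      by_cases hδ : δ ∈ U
      · exact Or.inl (hU δ hδ)
      · obtain ⟨k, hk, hfk⟩ := hf δ (by simpa using hδ)
        right
        by_cases h1 : k < x i
        · exact Or.inl ⟨k, h1, hfk⟩
        by_cases h2 : k < x i + x j
        · refine Or.inr (Or.inl ⟨k - x i, by omega, ?_⟩)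
          show f (x i + (k - x i)) = δ
          rw [Nat.add_sub_cancel' (by omega)]; exact hfk
        · refine Or.inr (Or.inr ?_)
          split_ifs at hcU with h3
          · refine ⟨h3, ?_⟩
            rw [← hfk]; congr 1; omega
          · omega
    · exact ⟨fun _ => 0, fun _ => 0, 0, fun h => absurd h hij⟩
  choose a b cc hsel using hsel
  let S : (G ⊕ (Σ i, Fin (x i))) → Type := fun k => Sum.rec (fun _ => St0) (fun _ => G) k
  let instS : ∀ k, Fintype (S k) := fun k => match k with
    | .inl f => (inferInstance : Fintype St0)
    | .inr p => (inferInstance : Fintype G)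
  let c : ∀ k, S k → Fin (n + 1) × G := fun k => match k with
    | .inl f => fun (st : St0) => ((c0 st).1, (c0 st).2 + f)
    | .inr p => fun (y : G) => (p.1, y)
  let l : ∀ k, S k → Fin n → Fin (n + 1) × G := fun k => match k with
    | .inl f => fun (st : St0) t => ((l0 st t).1, (l0 st t).2 + f)
    | .inr p => fun (y : G) t => (p.1.succAbove t,
        if p.1 < p.1.succAbove t then y + a p.1 (p.1.succAbove t) p.2
          else y - b (p.1.succAbove t) p.1 p.2)
  let μ : Fin (n + 1) × G → Fin (n + 1) × G := fun p =>
    (ρ p.1, if p.1 < ρ p.1 then p.2 + cc p.1 (ρ p.1) else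
      if ρ p.1 < p.1 then p.2 - cc (ρ p.1) p.1 else p.2 + κ0)
  -- coverage for ordered rows
  have hcov1 : ∀ (i j : Fin (n + 1)) (y z : G), i < j →
      μ (i, y) = (j, z) ∨ ∃ k st t, (c k st = (i, y) ∧ l k st t = (j, z)) ∨
        (c k st = (j, z) ∧ l k st t = (i, y)) := by
    intro i j y z hij
    rcases hsel i j hij (z - y) with ⟨st, t, y', h⟩ | ⟨t, ht, h⟩ | ⟨t, ht, h⟩ | ⟨h1, h2⟩
    · right
      refine ⟨Sum.inl (y - y'), st, t, ?_⟩
      rcases h with ⟨h1, h2⟩ | ⟨h1, h2⟩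
      · left
        simp only [c, l, h1, h2]
        refine ⟨?_, ?_⟩ <;> congr 1 <;> abel
      · right
        simp only [c, l, h1, h2]
        refine ⟨?_, ?_⟩ <;> congr 1 <;> abel
    · right
      obtain ⟨t', ht'⟩ := Fin.exists_succAbove_eq hij.ne'
      refine ⟨Sum.inr ⟨i, ⟨t, ht⟩⟩, y, t', Or.inl ⟨rfl, ?_⟩⟩
      simp only [l, ht', hij, if_true, h]
      congr 1; abel
    · right
      obtain ⟨t', ht'⟩ := Fin.exists_succAbove_eq hij.ne
      refine ⟨Sum.inr ⟨j, ⟨t, ht⟩⟩, z, t', Or.inr ⟨rfl, ?_⟩⟩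
      simp only [l, ht', hij.not_gt, if_false, h]
      congr 1; abel
    · left
      simp only [μ, h1, hij, if_true, h2]
      congr 1; abel
  have hμ1 : ∀ p, μ (μ p) = p := by
    rintro ⟨i, y⟩
    simp only [μ, hρ]
    rcases lt_trichotomy i (ρ i) with h | h | h
    · simp [h, h.not_gt]
    · rw [← h]; simp [add_assoc, hκ]
    · simp [h, h.not_gt]
  have hμ2 : ∀ p, μ p ≠ p := by
    rintro ⟨i, y⟩ h
    simp only [μ, Prod.mk.injEq] at h
    obtain ⟨h1, h2⟩ := h
    rw [h1] at h2
    simp at h2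
    exact hκ' i h1 h2
  refine @urd_of (Fin (n + 1) × G) (G ⊕ (Σ i, Fin (x i))) _ _ n v s hv (by simp [hvw])
    (by simp [hs]) hcount μ hμ1 hμ2 S instS c l ?_ ?_ ?_
  · rintro (f | p)
    · show Fintype.card St0 * (n + 1) = v
      rw [hcard, hvw, mul_comm]
    · show Fintype.card G * (n + 1) = v
      rw [hvw, mul_comm]
  · rintro (f | p) ⟨i, y⟩
    · obtain ⟨⟨st, o⟩, h⟩ := hsurj (i, y - f)
      refine ⟨(st, o), ?_⟩
      cases o with
      | none =>
        change c0 st = _ at h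
        show ((c0 st).1, (c0 st).2 + f) = (i, y)
        rw [h]; simp
      | some t =>
        change l0 st t = _ at h
        show ((l0 st t).1, (l0 st t).2 + f) = (i, y)
        rw [h]; simp
    · obtain ⟨j, t⟩ := p
      by_cases hij : i = j
      · subst hij
        exact ⟨(y, none), rfl⟩
      · obtain ⟨t', ht'⟩ := Fin.exists_succAbove_eq hij
        by_cases hlt : j < i
        · refine ⟨(y - a j i t, some t'), ?_⟩
          show (j.succAbove t', if j < j.succAbove t' then _ else _) = (i, y)
          simp [ht', hlt]
        · refine ⟨(y + b i j t, some t'), ?_⟩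
          show (j.succAbove t', if j < j.succAbove t' then _ else _) = (i, y)
          simp [ht', hlt]
  · rintro ⟨i, y⟩ ⟨j, z⟩ hne
    rcases lt_trichotomy i j with h | h | h
    · exact hcov1 i j y z h
    · subst h
      have hδ : z - y ≠ 0 := fun h => hne (by rw [sub_eq_zero.1 h])
      rcases hpure i (z - y) hδ with ⟨st, t, y', h⟩ | ⟨h1, h2⟩
      · right
        refine ⟨Sum.inl (y - y'), st, t, ?_⟩
        rcases h with ⟨h1, h2⟩ | ⟨h1, h2⟩
        · left
          simp only [c, l, h1, h2]
          refine ⟨?_, ?_⟩ <;> congr 1 <;> abel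
        · right
          simp only [c, l, h1, h2]
          refine ⟨?_, ?_⟩ <;> congr 1 <;> abel
      · left
        simp only [μ, h1, lt_irrefl, if_false, ← h2]
        congr 1; abel
    · rcases hcov1 j i z y h with h | ⟨k, st, t, h⟩
      · left; rw [← h, hμ1]
      · exact Or.inr ⟨k, st, t, h.symm⟩

/-- sign of a row -/
def rowSgn {m : ℕ} {G : Type} [AddCommGroup G] (i : Fin (m + 1)) (ξ : G) : G := if i = 0 then ξ else -ξ

lemma rowSgn_rowSgn {m : ℕ} {G : Type} [AddCommGroup G] (i : Fin (m + 1)) (ξ : G) :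
    rowSgn i (rowSgn i ξ) = ξ := by
  unfold rowSgn; split_ifs <;> simp

lemma rowSgn_add {m : ℕ} {G : Type} [AddCommGroup G] (i : Fin (m + 1)) (ξ η : G) :
    rowSgn i (ξ + η) = rowSgn i ξ + rowSgn i η := by
  unfold rowSgn; split_ifs
  · rfl
  · abel

lemma usedD_neg {R G St0 : Type} [AddCommGroup G] {n : ℕ} {c0 : St0 → R × G}
    {l0 : St0 → Fin n → R × G} {i : R} {δ : G} (h : usedD c0 l0 i i δ) :
    usedD c0 l0 i i (-δ) := by
  obtain ⟨st, t, y, h⟩ := h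
  refine ⟨st, t, y + δ, ?_⟩
  rw [add_neg_cancel_right]
  tauto

lemma usedD_sgn {m : ℕ} {G St0 : Type} [AddCommGroup G] {n : ℕ} {c0 : St0 → Fin (m + 1) × G}
    {l0 : St0 → Fin n → Fin (m + 1) × G} {i j : Fin (m + 1)} {δ : G}
    (h : usedD c0 l0 i i (rowSgn j δ)) :
    usedD c0 l0 i i δ := by
  unfold rowSgn at h
  split_ifs at h
  · exact h
  · simpa using usedD_neg h

lemma urd_even_abs {G : Type} [AddCommGroup G] [Fintype G] [DecidableEq G] (n κ v s : ℕ)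
    (hκ1 : 1 ≤ κ) (hG : Fintype.card G = 2 * (n * κ + 1))
    (hvw : v = (n + 1) * Fintype.card G)
    (hcount : 2 * n * s = (v - 2) * (n + 1))
    (hs : s = Fintype.card G + ((κ - 1) + n * (n * κ + 1)))
    (cen : Fin κ → G) (lf : Fin κ → Fin n → G)
    (hinj : Function.Injective (stMap cen lf))
    (h2 : ∀ ξ η, ξ ∉ Set.range (stMap cen lf) → η ∉ Set.range (stMap cen lf) → ξ + ξ = η + η → ξ = η)
    (κ0 : G) (hκ : κ0 + κ0 = 0) (hκ' : κ0 ≠ 0)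
    (hp : ∀ δ : G, δ ≠ 0 → δ = κ0 ∨ ∃ a t, lf a t = cen a + δ ∨ lf a t = cen a - δ) :
    IsURD n v 1 s := by
  classical
  let O : Finset G := Finset.univ.image (stMap cen lf)
  have hO : ∀ ξ, ξ ∈ O ↔ ξ ∈ Set.range (stMap cen lf) := by
    intro ξ; simp [O]
  have hOc : O.card = κ * (n + 1) := by
    rw [Finset.card_image_of_injective _ hinj]; simp
  have hRc : (Oᶜ).card = 2 * (n * κ + 1) - κ * (n + 1) := by
    rw [Finset.card_compl, hOc, hG]
  have hle : κ * (n + 1) ≤ 2 * (n * κ + 1) := by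
    rw [← hOc, ← hG]; exact Finset.card_le_univ _
  let c0 : (Fin (n + 1) × Fin κ) ⊕ {ξ // ξ ∈ Oᶜ} → Fin (n + 1) × G := fun k => match k with
    | .inl p => (p.1, rowSgn p.1 (cen p.2))
    | .inr ξ => (0, ξ)
  let l0 : (Fin (n + 1) × Fin κ) ⊕ {ξ // ξ ∈ Oᶜ} → Fin n → Fin (n + 1) × G := fun k t => match k with
    | .inl p => (p.1, rowSgn p.1 (lf p.2 t))
    | .inr ξ => (t.succ, -ξ)
  refine urd_group n v s (by rw [hvw, hG]; nlinarith) hvw hcount c0 l0 ?_ ?_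
    (fun i => if i = 0 then κ - 1 else n * κ + 1) ?_ id (fun _ => rfl) κ0 hκ (fun _ _ => hκ') ?_ ?_
  · simp only [Fintype.card_sum, Fintype.card_prod, Fintype.card_fin, Fintype.card_coe, hRc, hG]
    have : (n + 1) * κ = κ * (n + 1) := mul_comm _ _
    omega
  · rintro ⟨i, y⟩
    by_cases h : rowSgn i y ∈ O
    · rw [hO] at h
      obtain ⟨⟨a, o⟩, h⟩ := h
      refine ⟨(.inl (i, a), o), ?_⟩
      cases o with
      | none =>
        change cen a = _ at h
        show (i, rowSgn i (cen a)) = (i, y)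
        rw [h, rowSgn_rowSgn]
      | some t =>
        change lf a t = _ at h
        show (i, rowSgn i (lf a t)) = (i, y)
        rw [h, rowSgn_rowSgn]
    · induction i using Fin.cases with
      | zero =>
        refine ⟨(.inr ⟨rowSgn 0 y, by simpa using h⟩, none), ?_⟩
        show ((0 : Fin (n + 1)), rowSgn (0 : Fin (n + 1)) y) = (0, y)
        simp [rowSgn]
      | succ t =>
        refine ⟨(.inr ⟨rowSgn t.succ y, by simpa using h⟩, some t), ?_⟩
        show (t.succ, -rowSgn t.succ y) = (t.succ, y)
        simp [rowSgn]
  · rw [hs, Fin.sum_univ_succ]; simp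
  · intro i δ hδ
    rcases hp δ hδ with h | ⟨a, t, h⟩
    · exact Or.inr ⟨rfl, h⟩
    · left
      rcases h with h | h
      · apply usedD_sgn (j := i)
        refine ⟨.inl (i, a), t, rowSgn i (cen a), Or.inl ⟨rfl, ?_⟩⟩
        show (i, rowSgn i (lf a t)) = _
        rw [h, rowSgn_add]
      · rw [← neg_neg δ]
        apply usedD_neg
        apply usedD_sgn (j := i)
        refine ⟨.inl (i, a), t, rowSgn i (cen a), Or.inl ⟨rfl, ?_⟩⟩
        show (i, rowSgn i (lf a t)) = _
        rw [h, sub_eq_add_neg, rowSgn_add]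
  · intro i j hij
    have hj : j ≠ 0 := fun h => by subst h; exact absurd hij (Fin.not_lt_zero i)
    by_cases hi : i = 0
    · subst hi
      refine ⟨Oᶜ.image (fun ξ => -(ξ + ξ)), ?_, ?_⟩
      · intro δ hδ
        simp only [Finset.mem_image] at hδ
        obtain ⟨ξ, hξ, rfl⟩ := hδ
        obtain ⟨t, rfl⟩ := Fin.exists_succ_eq.2 hj
        refine ⟨.inr ⟨ξ, hξ⟩, t, ξ, Or.inl ⟨rfl, ?_⟩⟩
        show (t.succ, -ξ) = _
        congr 1; abel
      · rw [Finset.card_image_of_injOn, hRc, hG]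
        · simp only [hj, if_true, if_false]
          have h5 : κ * (n + 1) = n * κ + κ := by ring
          rw [h5] at hle ⊢
          omega
        · intro ξ hξ η hη h
          simp only [Finset.coe_compl, Set.mem_compl_iff, Finset.mem_coe, hO] at hξ hη
          exact h2 ξ η hξ hη (neg_injective h)
    · refine ⟨∅, by simp, ?_⟩
      simp only [hi, hj, if_false, hG]
      omega

lemma zmod_natCast_eq_add {w a b : ℕ} (h : ((a : ℕ) : ZMod w) = (b : ℕ)) :
    ∃ q : ℤ, (a : ℤ) = b + w * q := by
  have h' : (((a : ℤ)) : ZMod w) = ((b : ℤ) : ZMod w) := by push_cast; exact h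
  rw [ZMod.intCast_eq_intCast_iff_dvd_sub] at h'
  obtain ⟨q, hq⟩ := h'
  exact ⟨-q, by linarith⟩

lemma small_mult {N q x : ℤ} (h : x = N * q) (h1 : -N < x) (h2 : x < N) : q = 0 := by
  have hN : 0 < N := by linarith
  have a1 : q < 1 := by by_contra h3; nlinarith
  have a2 : -1 < q := by by_contra h3; nlinarith
  omega

lemma even_aux1 {A B T U n κ q : ℤ}
    (hq : A * (n * κ) + (A * n + T + 1) = B * (n * κ) + (B * n + U + 1) + 2 * (n * κ + 1) * q)
    (hnZ : 3 ≤ n) (hκZ : 1 ≤ κ) (ha : A + 1 ≤ κ) (hb : B + 1 ≤ κ) (ht : T + 1 ≤ n) (hu : U + 1 ≤ n)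
    (ha0 : 0 ≤ A) (hb0 : 0 ≤ B) (ht0 : 0 ≤ T) (hu0 : 0 ≤ U) : A = B ∧ T = U := by
  have e1 : A * (n - 1) + T - (B * (n - 1) + U) = (n * κ + 1) * (2 * q + B - A) := by linarith
  have b1 : A * (n - 1) ≤ (κ - 1) * (n - 1) := by nlinarith
  have b2 : B * (n - 1) ≤ (κ - 1) * (n - 1) := by nlinarith
  have b3 : 0 ≤ A * (n - 1) := by nlinarith
  have b4 : 0 ≤ B * (n - 1) := by nlinarith
  have b5 : (κ - 1) * (n - 1) + n ≤ n * κ := by nlinarith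
  have z := small_mult e1 (by linarith) (by linarith)
  rw [z] at e1
  have e2 : U - T = (n - 1) * (A - B) := by linarith
  have l1 : A - B ≤ 1 := by by_contra h; nlinarith
  have l2 : B - A ≤ 1 := by by_contra h; nlinarith
  have e3 : A = B := by omega
  refine ⟨e3, ?_⟩
  rw [e3] at e2; linarith

lemma even_aux2 {A B U n κ q : ℤ}
    (hq : A * (n * κ) = B * (n * κ) + (B * n + U + 1) + 2 * (n * κ + 1) * q)
    (hnZ : 3 ≤ n) (hκZ : 1 ≤ κ) (ha : A + 1 ≤ κ) (hb : B + 1 ≤ κ) (hu : U + 1 ≤ n)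
    (ha0 : 0 ≤ A) (hb0 : 0 ≤ B) (hu0 : 0 ≤ U) : False := by
  have e1 : A + (B * (n - 1) + U + 1) = (n * κ + 1) * (A - 2 * q - B) := by linarith
  have b2 : B * (n - 1) ≤ (κ - 1) * (n - 1) := by nlinarith
  have b4 : 0 ≤ B * (n - 1) := by nlinarith
  have b5 : (κ - 1) * (n - 1) + n + κ ≤ n * κ + 1 := by nlinarith
  have z := small_mult e1 (by linarith) (by linarith)
  rw [z] at e1
  linarith

lemma urd_even (n κ v s : ℕ) (hn : 3 ≤ n) (hκ1 : 1 ≤ κ)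
    (hvw : v = (n + 1) * (2 * (n * κ + 1)))
    (hcount : 2 * n * s = (v - 2) * (n + 1))
    (hs : s = 2 * (n * κ + 1) + ((κ - 1) + n * (n * κ + 1))) : IsURD n v 1 s := by
  classical
  obtain ⟨w, hw⟩ : ∃ w, w = 2 * (n * κ + 1) := ⟨_, rfl⟩
  have : NeZero w := ⟨by omega⟩
  have hκn : κ ≤ n * κ := Nat.le_mul_of_pos_left _ (by omega)
  have hwZ : (w : ℤ) = 2 * (n * κ + 1) := by exact_mod_cast hw
  let cen : Fin κ → ZMod w := fun a => ((a * (n * κ) : ℕ) : ZMod w)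
  let lf : Fin κ → Fin n → ZMod w := fun a t => ((a * (n * κ) + (a * n + t + 1) : ℕ) : ZMod w)
  have hnZ : (3 : ℤ) ≤ n := by exact_mod_cast hn
  have hκZ : (1 : ℤ) ≤ κ := by exact_mod_cast hκ1
  refine urd_even_abs (G := ZMod w) n κ v s hκ1 (by rw [ZMod.card, hw]) (by rw [ZMod.card, hvw, hw])
    hcount (by rw [ZMod.card, hs, hw]) cen lf ?_ ?_ ((n * κ + 1 : ℕ) : ZMod w) ?_ ?_ ?_
  · have hcc : ∀ a b : Fin κ, cen a = cen b → a = b := by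
      intro a b h
      obtain ⟨q, hq⟩ := zmod_natCast_eq_add h
      push_cast at hq
      have ha := a.2; have hb := b.2
      rw [hwZ] at hq
      have h6 : ((b : ℕ) : ℤ) - (a : ℕ) = (n * κ + 1) * (2 * q + (b : ℕ) - (a : ℕ)) := by linarith
      have hκn' : (κ : ℤ) ≤ n * κ := by exact_mod_cast hκn
      have := small_mult h6 (by omega) (by omega)
      apply Fin.ext
      rw [this] at h6
      omega
    have hll : ∀ (a b : Fin κ) (t u : Fin n), lf a t = lf b u → a = b ∧ t = u := by
      intro a b t u h
      obtain ⟨q, hq⟩ := zmod_natCast_eq_add h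
      push_cast at hq
      rw [hwZ] at hq
      have ha : ((a : ℕ) : ℤ) + 1 ≤ κ := by exact_mod_cast a.2
      have hb : ((b : ℕ) : ℤ) + 1 ≤ κ := by exact_mod_cast b.2
      have ht : ((t : ℕ) : ℤ) + 1 ≤ n := by exact_mod_cast t.2
      have hu : ((u : ℕ) : ℤ) + 1 ≤ n := by exact_mod_cast u.2
      have ha0 : (0 : ℤ) ≤ (a : ℕ) := by positivity
      have hb0 : (0 : ℤ) ≤ (b : ℕ) := by positivity
      have ht0 : (0 : ℤ) ≤ (t : ℕ) := by positivity
      have hu0 : (0 : ℤ) ≤ (u : ℕ) := by positivity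
      have hab : ((a : ℕ) : ℤ) = (b : ℕ) → a = b := fun h => Fin.ext (by exact_mod_cast h)
      have htu : ((t : ℕ) : ℤ) = (u : ℕ) → t = u := fun h => Fin.ext (by exact_mod_cast h)
      obtain ⟨h7, h8⟩ := even_aux1 hq hnZ hκZ ha hb ht hu ha0 hb0 ht0 hu0
      exact ⟨hab h7, htu h8⟩
    have hcl : ∀ (a b : Fin κ) (u : Fin n), cen a ≠ lf b u := by
      intro a b u h
      obtain ⟨q, hq⟩ := zmod_natCast_eq_add h
      push_cast at hq
      rw [hwZ] at hq
      have ha : ((a : ℕ) : ℤ) + 1 ≤ κ := by exact_mod_cast a.2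
      have hb : ((b : ℕ) : ℤ) + 1 ≤ κ := by exact_mod_cast b.2
      have hu : ((u : ℕ) : ℤ) + 1 ≤ n := by exact_mod_cast u.2
      have ha0 : (0 : ℤ) ≤ (a : ℕ) := by positivity
      have hb0 : (0 : ℤ) ≤ (b : ℕ) := by positivity
      have hu0 : (0 : ℤ) ≤ (u : ℕ) := by positivity
      exact even_aux2 hq hnZ hκZ ha hb hu ha0 hb0 hu0
    rintro ⟨a, o⟩ ⟨b, o'⟩ h
    cases o with
    | none => cases o' with
      | none => rw [hcc a b h]
      | some u => exact absurd h (hcl a b u)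
    | some t => cases o' with
      | none => exact absurd h.symm (hcl b a t)
      | some u => obtain ⟨h1, h2⟩ := hll a b t u h; rw [h1, h2]
  · -- every class mod N meets the range
    have key : ∀ r : ℕ, r < n * κ + 1 → ∃ p : Fin κ × Option (Fin n), ∃ g : ℕ,
        stMap cen lf p = (g : ZMod w) ∧ ∃ q : ℤ, (g : ℤ) = r + (n * κ + 1) * q := by
      intro r hr
      by_cases h0 : r = 0
      · exact ⟨(⟨0, hκ1⟩, none), 0, by simp [stMap, cen], 0, by simp [h0]⟩
      by_cases h1 : r ≤ n * κ + 1 - κ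
      · -- leaf
        have hk : ∃ a t, a < κ ∧ t < n ∧ r = a * (n - 1) + t + 1 := by
          by_cases h2 : r = n * κ + 1 - κ
          · refine ⟨κ - 1, n - 1, by omega, by omega, ?_⟩
            obtain ⟨k, rfl⟩ : ∃ k, κ = k + 1 := ⟨κ - 1, by omega⟩
            obtain ⟨m, rfl⟩ : ∃ m, n = m + 1 := ⟨n - 1, by omega⟩
            rw [h2]; simp
            have : (m + 1) * (k + 1) = k * m + m + (k + 1) := by ring
            omega
          · refine ⟨(r - 1) / (n - 1), (r - 1) % (n - 1), ?_, ?_, ?_⟩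
            · rw [Nat.div_lt_iff_lt_mul (by omega)]
              obtain ⟨m, rfl⟩ : ∃ m, n = m + 1 := ⟨n - 1, by omega⟩
              have : (m + 1) * κ = κ * m + κ := by ring
              simp; omega
            · have := Nat.mod_lt (r - 1) (show 0 < n - 1 by omega); omega
            · have := Nat.div_add_mod' (r - 1) (n - 1); omega
        obtain ⟨a, t, ha, ht, hr⟩ := hk
        refine ⟨(⟨a, ha⟩, some ⟨t, ht⟩), _, rfl, a, ?_⟩
        obtain ⟨m, rfl⟩ : ∃ m, n = m + 1 := ⟨n - 1, by omega⟩
        simp at hr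
        rw [hr]; push_cast; ring
      · refine ⟨(⟨n * κ + 1 - r, by omega⟩, none), _, rfl, n * κ - r, ?_⟩
        push_cast [Nat.cast_sub hr.le]
        ring
    intro ξ η hξ hη h
    by_contra hne
    have hN : ξ = η + ((n * κ + 1 : ℕ) : ZMod w) := by
      have hz : (ξ - η) + (ξ - η) = 0 := by
        have : (ξ - η) + (ξ - η) = (ξ + ξ) - (η + η) := by abel
        rw [this, h, sub_self]
      have hz' : ξ - η ≠ 0 := sub_ne_zero.2 hne
      have hv : ((ξ - η).val : ZMod w) = ξ - η := ZMod.natCast_zmod_val _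
      rw [← hv, ← Nat.cast_add, ZMod.natCast_eq_zero_iff] at hz
      have hv0 : (ξ - η).val ≠ 0 := by simpa using hz'
      have hlt := ZMod.val_lt (ξ - η)
      obtain ⟨q, hq⟩ := hz
      have hq1 : q = 1 := by
        have : q < 2 := by by_contra hh; nlinarith
        have : q ≠ 0 := by rintro rfl; omega
        omega
      have : (ξ - η).val = n * κ + 1 := by subst hq1; omega
      rw [this] at hv
      rw [hv]; abel
    obtain ⟨p, g, hp, q, hg⟩ := key (η.val % (n * κ + 1)) (Nat.mod_lt _ (by omega))
    have hηv : (η.val : ZMod w) = η := ZMod.natCast_zmod_val _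
    obtain ⟨Z, e⟩ : ∃ Z : ℤ, (η.val : ℤ) = g + (n * κ + 1) * Z := by
      refine ⟨(η.val / (n * κ + 1) : ℕ) - q, ?_⟩
      have := Nat.div_add_mod η.val (n * κ + 1)
      have h3 : (η.val : ℤ) = (n * κ + 1) * (η.val / (n * κ + 1) : ℕ) + (η.val % (n * κ + 1) : ℕ) := by
        exact_mod_cast this.symm
      rw [hg]; linarith
    have hww : ((n * κ + 1 : ℕ) : ZMod w) * 2 = 0 := by
      have : ((2 * (n * κ + 1) : ℕ) : ZMod w) = 0 := by rw [← hw]; simp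
      push_cast at this ⊢; rw [mul_comm]; exact this
    have e' : η = stMap cen lf p + ((n * κ + 1 : ℕ) : ZMod w) * (Z : ZMod w) := by
      have := congrArg (fun z : ℤ => (z : ZMod w)) e
      rw [hp]
      simp only [Int.cast_natCast, Int.cast_add, Int.cast_mul, hηv] at this
      rw [← sub_eq_zero] at this ⊢
      rw [← this]; push_cast; ring
    rcases Int.even_or_odd' Z with ⟨z, hz | hz⟩
    · apply hη
      refine ⟨p, ?_⟩
      rw [e', hz]; push_cast at hww ⊢; linear_combination (-(z : ZMod w)) * hww
    · apply hξ
      refine ⟨p, ?_⟩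
      rw [hN, e', hz]; push_cast at hww ⊢; linear_combination (-(z : ZMod w) - 1) * hww
  · rw [← Nat.cast_add, ZMod.natCast_eq_zero_iff, hw]; exact ⟨1, by ring⟩
  · rw [Ne, ZMod.natCast_eq_zero_iff]; intro h; have := Nat.le_of_dvd (by omega) h; omega
  · intro δ hδ
    have hv : (δ.val : ZMod w) = δ := ZMod.natCast_zmod_val _
    have hv0 : δ.val ≠ 0 := by simpa using hδ
    have hlt := ZMod.val_lt δ
    have key : ∀ d : ℕ, 1 ≤ d → d ≤ n * κ → ∃ a t, lf a t = cen a + (d : ZMod w) := by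
      intro d h1 h2
      refine ⟨⟨(d - 1) / n, ?_⟩, ⟨(d - 1) % n, Nat.mod_lt _ (by omega)⟩, ?_⟩
      · rw [Nat.div_lt_iff_lt_mul (by omega), mul_comm]; omega
      · have := Nat.div_add_mod' (d - 1) n
        simp only [lf, cen]
        rw [← Nat.cast_add]
        congr 2; omega
    rcases lt_trichotomy δ.val (n * κ + 1) with h | h | h
    · obtain ⟨a, t, h⟩ := key δ.val (by omega) (by omega)
      exact Or.inr ⟨a, t, Or.inl (by rw [h, hv])⟩
    · left; rw [← h, hv]
    · obtain ⟨a, t, h⟩ := key (w - δ.val) (by omega) (by omega)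
      refine Or.inr ⟨a, t, Or.inr ?_⟩
      rw [h, Nat.cast_sub hlt.le, hv]; simp [sub_eq_add_neg]

/-- the local slots in the odd case -/
def oddSlot {G : Type} [AddCommGroup G] {n κ e : ℕ} (cen : Fin κ → G) (lf : Fin κ → Fin n → G)
    (sl : Fin (e + 1) → G) (E : Fin e → G) :
    (Fin κ × Option (Fin n)) ⊕ (Option (Fin (e + 1)) ⊕ Fin e) → G :=
  Sum.elim (stMap cen lf) (Sum.elim (fun o => o.elim 0 sl) E)

lemma urd_odd_abs {G : Type} [AddCommGroup G] [Fintype G] [DecidableEq G] (e n κ v s : ℕ)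
    (hn : n = 2 * e + 1)
    (hG : Fintype.card G = 2 * n * κ + n + 2)
    (hvw : v = (n + 1) * Fintype.card G)
    (hcount : 2 * n * s = (v - 2) * (n + 1))
    (hs : s = Fintype.card G + ((κ + e) + n * (n * κ + e + 1)))
    (cen : Fin κ → G) (lf : Fin κ → Fin n → G) (sl : Fin (e + 1) → G) (E : Fin e → G)
    (hinj : Function.Injective (oddSlot cen lf sl E))
    (h2 : ∀ ξ η : G, ξ + ξ = η + η → ξ = η)
    (hE : ∀ ξ t, ξ ∉ Set.range (oddSlot cen lf sl E) → ξ + ξ ≠ E t)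
    (hp : ∀ δ : G, δ ≠ 0 → (∃ a t, lf a t = cen a + δ ∨ lf a t = cen a - δ) ∨
      ∃ t, sl t = δ ∨ sl t = - δ) :
    IsURD n v 1 s := by
  classical
  let O : Finset G := Finset.univ.image (oddSlot cen lf sl E)
  have hO : ∀ ξ, ξ ∈ O ↔ ξ ∈ Set.range (oddSlot cen lf sl E) := by
    intro ξ; simp [O]
  have hOc : O.card = κ * (n + 1) + (n + 1) := by
    rw [Finset.card_image_of_injective _ hinj]; simp; omega
  have hRc : (Oᶜ).card = 2 * n * κ + n + 2 - (κ * (n + 1) + (n + 1)) := by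
    rw [Finset.card_compl, hOc, hG]
  have hle : κ * (n + 1) + (n + 1) ≤ 2 * n * κ + n + 2 := by
    rw [← hOc, ← hG]; exact Finset.card_le_univ _
  let sh : Fin e → Fin (n + 1) := fun t => ⟨t + 1, by omega⟩
  let hf : Fin (n + 1) := ⟨e + 1, by omega⟩
  let c0 : (Fin (n + 1) × Fin κ) ⊕ (Fin (n + 1) ⊕ {ξ // ξ ∈ Oᶜ}) → Fin (n + 1) × G := fun k => match k with
    | .inl p => (p.1, rowSgn p.1 (cen p.2))
    | .inr (.inl i) => (i, 0)
    | .inr (.inr ξ) => (0, ξ)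
  let l0 : (Fin (n + 1) × Fin κ) ⊕ (Fin (n + 1) ⊕ {ξ // ξ ∈ Oᶜ}) → Fin n → Fin (n + 1) × G := fun k t => match k with
    | .inl p => (p.1, rowSgn p.1 (lf p.2 t))
    | .inr (.inl i) => if h : t.1 < e + 1 then (i, rowSgn i (sl ⟨t, h⟩)) else
        (i + sh ⟨t - (e + 1), by omega⟩, rowSgn (i + sh ⟨t - (e + 1), by omega⟩) (E ⟨t - (e + 1), by omega⟩))
    | .inr (.inr ξ) => (t.succ, -ξ)
  have hl1 : ∀ i (t : Fin (e + 1)), l0 (.inr (.inl i)) ⟨t, by omega⟩ = (i, rowSgn i (sl t)) := by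
    intro i t
    simp only [l0]
    split_ifs with h
    · rfl
    · exact absurd t.2 h
  have hl2 : ∀ i (t : Fin e), l0 (.inr (.inl i)) ⟨e + 1 + t, by omega⟩ =
      (i + sh t, rowSgn (i + sh t) (E t)) := by
    intro i t
    simp [l0]
    intro h; omega
  have hhf : hf + hf = 0 := by
    apply Fin.ext
    rw [Fin.val_add]
    show (e + 1 + (e + 1)) % (n + 1) = 0
    have : e + 1 + (e + 1) = n + 1 := by omega
    rw [this, Nat.mod_self]
  have hhf0 : hf ≠ 0 := by
    intro h; have := congrArg Fin.val h; simp [hf] at this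
  have harc : ∀ i j : Fin (n + 1), i < j → i + hf = j ∨ ∃ δ, usedD c0 l0 i j δ ∧
      (i = 0 → ∃ t, δ = - E t) := by
    intro i j hij
    have hij' : i.1 < j.1 := hij
    have hj2 := j.2
    rcases lt_trichotomy (j.1 - i.1) (e + 1) with h | h | h
    · right
      have hsh : i + sh ⟨j.1 - i.1 - 1, by omega⟩ = j := by
        apply Fin.ext
        rw [Fin.val_add]
        show (i.1 + (j.1 - i.1 - 1 + 1)) % (n + 1) = j
        have : i.1 + (j.1 - i.1 - 1 + 1) = j := by omega
        rw [this, Nat.mod_eq_of_lt hj2]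
      refine ⟨rowSgn j (E ⟨j.1 - i.1 - 1, by omega⟩), ⟨.inr (.inl i), ⟨e + 1 + (j.1 - i.1 - 1), by omega⟩, 0, Or.inl ⟨rfl, ?_⟩⟩, ?_⟩
      · have := hl2 i ⟨j.1 - i.1 - 1, by omega⟩
        rw [hsh] at this
        rw [zero_add]
        exact this
      · rintro rfl
        have hj0 : j ≠ 0 := hij.ne'
        exact ⟨_, by simp only [rowSgn, hj0, if_false]; rfl⟩
    · left
      apply Fin.ext
      rw [Fin.val_add]
      show (i.1 + (e + 1)) % (n + 1) = j
      have : i.1 + (e + 1) = j := by omega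
      rw [this, Nat.mod_eq_of_lt hj2]
    · right
      have hsh : j + sh ⟨n - (j.1 - i.1), by omega⟩ = i := by
        apply Fin.ext
        rw [Fin.val_add]
        show (j.1 + (n - (j.1 - i.1) + 1)) % (n + 1) = i
        have : j.1 + (n - (j.1 - i.1) + 1) = i + (n + 1) := by omega
        rw [this, Nat.add_mod_right, Nat.mod_eq_of_lt i.2]
      refine ⟨- rowSgn i (E ⟨n - (j.1 - i.1), by omega⟩),
        ⟨.inr (.inl j), ⟨e + 1 + (n - (j.1 - i.1)), by omega⟩,
          rowSgn i (E ⟨n - (j.1 - i.1), by omega⟩), Or.inr ⟨?_, ?_⟩⟩, ?_⟩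
      · rw [add_neg_cancel]
      · have := hl2 j ⟨n - (j.1 - i.1), by omega⟩
        rw [hsh] at this
        exact this
      · rintro rfl
        exact ⟨_, by simp only [rowSgn, if_true]; rfl⟩
  refine urd_group n v s (by rw [hvw, hG]; nlinarith) hvw hcount c0 l0 ?_ ?_
    (fun i => if i = 0 then κ + e else n * κ + e + 1) ?_ (fun i => i + hf)
    (fun i => by rw [add_assoc, hhf, add_zero]) 0 (by simp)
    (fun i h => absurd (by simpa using h) hhf0) ?_ ?_
  · simp only [Fintype.card_sum, Fintype.card_prod, Fintype.card_fin, Fintype.card_coe, hRc, hG]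
    have : (n + 1) * κ = κ * (n + 1) := mul_comm _ _
    omega
  · rintro ⟨i, y⟩
    by_cases h : rowSgn i y ∈ O
    · rw [hO] at h
      obtain ⟨(⟨a, o⟩ | (o | t)), h⟩ := h
      · refine ⟨(.inl (i, a), o), ?_⟩
        cases o with
        | none =>
          change cen a = _ at h
          show (i, rowSgn i (cen a)) = (i, y)
          rw [h, rowSgn_rowSgn]
        | some t =>
          change lf a t = _ at h
          show (i, rowSgn i (lf a t)) = (i, y)
          rw [h, rowSgn_rowSgn]
      · cases o with
        | none =>
          change 0 = _ at h
          refine ⟨(.inr (.inl i), none), ?_⟩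
          show (i, 0) = (i, y)
          rw [← rowSgn_rowSgn i y, ← h]
          simp [rowSgn]
        | some t =>
          change sl t = _ at h
          refine ⟨(.inr (.inl i), some ⟨t, by omega⟩), ?_⟩
          refine (hl1 i t).trans ?_
          rw [h, rowSgn_rowSgn]
      · change E t = _ at h
        refine ⟨(.inr (.inl (i - sh t)), some ⟨e + 1 + t, by omega⟩), ?_⟩
        refine (hl2 (i - sh t) t).trans ?_
        rw [sub_add_cancel, h, rowSgn_rowSgn]
    · induction i using Fin.cases with
      | zero =>
        refine ⟨(.inr (.inr ⟨rowSgn 0 y, by simpa using h⟩), none), ?_⟩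
        show ((0 : Fin (n + 1)), rowSgn (0 : Fin (n + 1)) y) = (0, y)
        simp [rowSgn]
      | succ t =>
        refine ⟨(.inr (.inr ⟨rowSgn t.succ y, by simpa using h⟩), some t), ?_⟩
        show (t.succ, -rowSgn t.succ y) = (t.succ, y)
        simp [rowSgn]
  · rw [hs, Fin.sum_univ_succ]; simp
  · intro i δ hδ
    left
    rcases hp δ hδ with ⟨a, t, h⟩ | ⟨t, h⟩
    · rcases h with h | h
      · apply usedD_sgn (j := i)
        refine ⟨.inl (i, a), t, rowSgn i (cen a), Or.inl ⟨rfl, ?_⟩⟩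
        show (i, rowSgn i (lf a t)) = _
        rw [h, rowSgn_add]
      · rw [← neg_neg δ]
        apply usedD_neg
        apply usedD_sgn (j := i)
        refine ⟨.inl (i, a), t, rowSgn i (cen a), Or.inl ⟨rfl, ?_⟩⟩
        show (i, rowSgn i (lf a t)) = _
        rw [h, sub_eq_add_neg, rowSgn_add]
    · have : usedD c0 l0 i i (sl t) := by
        apply usedD_sgn (j := i)
        refine ⟨.inr (.inl i), ⟨t, by omega⟩, 0, Or.inl ⟨rfl, ?_⟩⟩
        rw [hl1, zero_add]
      rcases h with h | h
      · rwa [h] at this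
      · rw [← neg_neg δ, ← h]
        exact usedD_neg this
  · intro i j hij
    have hj : j ≠ 0 := fun h => by subst h; exact absurd hij (Fin.not_lt_zero i)
    by_cases hi : i = 0
    · subst hi
      have hU : ∀ δ ∈ Oᶜ.image (fun ξ => -(ξ + ξ)), usedD c0 l0 0 j δ := by
        intro δ hδ
        simp only [Finset.mem_image] at hδ
        obtain ⟨ξ, hξ, rfl⟩ := hδ
        obtain ⟨t, rfl⟩ := Fin.exists_succ_eq.2 hj
        refine ⟨.inr (.inr ⟨ξ, hξ⟩), t, ξ, Or.inl ⟨rfl, ?_⟩⟩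
        show (t.succ, -ξ) = _
        congr 1; abel
      have hUc : (Oᶜ.image (fun ξ => -(ξ + ξ))).card = 2 * n * κ + n + 2 - (κ * (n + 1) + (n + 1)) := by
        rw [Finset.card_image_of_injective, hRc]
        exact fun ξ η h => h2 ξ η (neg_injective h)
      have h5 : κ * (n + 1) = n * κ + κ := by ring
      have h6 : 2 * n * κ = n * κ + n * κ := by ring
      rw [h5, h6] at hle hUc
      rw [h6] at hG
      rcases harc 0 j hij with h | ⟨δ, hδ, h⟩
      · refine ⟨_, hU, ?_⟩
        rw [hUc, hG]
        simp only [h, hj, if_true, if_false]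
        omega
      · obtain ⟨t, ht⟩ := h rfl
        refine ⟨insert δ (Oᶜ.image (fun ξ => -(ξ + ξ))), ?_, ?_⟩
        · intro δ' hδ'
          rcases Finset.mem_insert.1 hδ' with rfl | h'
          · exact hδ
          · exact hU _ h'
        · rw [Finset.card_insert_of_notMem, hUc, hG]
          · simp only [hj, if_true, if_false]
            omega
          · intro h'
            simp only [Finset.mem_image] at h'
            obtain ⟨ξ, hξ, h'⟩ := h'
            rw [ht] at h'
            refine hE ξ t ?_ (neg_injective h')
            rw [← hO]; simpa using hξ
    · have h6 : 2 * n * κ = n * κ + n * κ := by ring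
      rw [h6] at hG
      rcases harc i j hij with h | ⟨δ, hδ, h⟩
      · refine ⟨∅, by simp, ?_⟩
        simp only [h, hi, hj, if_true, if_false, hG]
        omega
      · refine ⟨{δ}, by simpa using hδ, ?_⟩
        simp only [hi, hj, if_false, hG, Finset.card_singleton]
        omega

lemma zmod_cast_inj {w a b : ℕ} (ha : a < w) (hb : b < w) (h : (a : ZMod w) = (b : ZMod w)) : a = b := by
  rwa [ZMod.natCast_eq_natCast_iff', Nat.mod_eq_of_lt ha, Nat.mod_eq_of_lt hb] at h

lemma odd_aux1 {A B T U n : ℤ}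
    (hq : A * (2 * n - 1) + 2 * T = B * (2 * n - 1) + 2 * U)
    (hnZ : 3 ≤ n) (ht : T + 1 ≤ n) (hu : U + 1 ≤ n)
    (ht0 : 0 ≤ T) (hu0 : 0 ≤ U) : A = B ∧ T = U := by
  have e1 : 2 * U - 2 * T = (2 * n - 1) * (A - B) := by linarith
  have z := small_mult e1 (by linarith) (by linarith)
  have : A = B := by linarith
  refine ⟨this, ?_⟩
  rw [this] at e1; linarith

lemma urd_odd (e n κ v s : ℕ) (he : 1 ≤ e) (hn : n = 2 * e + 1)
    (hvw : v = (n + 1) * (2 * n * κ + n + 2))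
    (hcount : 2 * n * s = (v - 2) * (n + 1))
    (hs : s = 2 * n * κ + n + 2 + ((κ + e) + n * (n * κ + e + 1))) : IsURD n v 1 s := by
  classical
  obtain ⟨M, hM⟩ : ∃ M, M = n * κ := ⟨_, rfl⟩
  have h2M : 2 * n * κ = 2 * M := by rw [hM]; ring
  obtain ⟨w, hw⟩ : ∃ w, w = 2 * n * κ + n + 2 := ⟨_, rfl⟩
  have hw' : w = 2 * M + 2 * e + 3 := by rw [hw, h2M, hn]; ring
  have : NeZero w := ⟨by omega⟩
  have hκM : κ ≤ M := by rw [hM]; exact Nat.le_mul_of_pos_left _ (by omega)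
  let cN : Fin κ → ℕ := fun a => κ - a
  let lN : Fin κ → Fin n → ℕ := fun a t => κ + a * (2 * n - 1) + 2 * (t + 1)
  let sN : Fin (e + 1) → ℕ := fun t => 2 * M + 2 * (t + 1)
  let eN : Fin e → ℕ := fun t => 2 * M + 2 * t + 3
  have hlN : ∀ a t, lN a t ≤ 2 * M + 1 := by
    intro a t
    have ha : a.1 + 1 ≤ κ := a.2
    have ht : t.1 + 1 ≤ n := t.2
    obtain ⟨k, hk⟩ : ∃ k, κ = k + 1 := ⟨κ - 1, by omega⟩
    have h1 : a.1 * (2 * n - 1) ≤ k * (2 * n - 1) := Nat.mul_le_mul_right _ (by omega)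
    have h2 : M = k * n + n := by rw [hM, hk]; ring
    have h3 : k * (2 * n - 1) + k = 2 * (k * n) := by
      have : k * (2 * n - 1) + k = k * (2 * n - 1 + 1) := by ring
      rw [this, Nat.sub_add_cancel (by omega)]; ring
    show κ + a * (2 * n - 1) + 2 * (t + 1) ≤ _
    omega
  have hlN' : ∀ a t, κ + 2 ≤ lN a t := by
    intro a t
    show _ ≤ κ + a * (2 * n - 1) + 2 * (t + 1)
    omega
  let f : (Fin κ × Option (Fin n)) ⊕ (Option (Fin (e + 1)) ⊕ Fin e) → ℕ :=
    Sum.elim (fun p => p.2.elim (cN p.1) (lN p.1)) (Sum.elim (fun o => o.elim 0 sN) eN)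
  have hf : ∀ p, f p < w := by
    rintro (⟨a, (_ | t)⟩ | ((_ | t) | t))
    · show κ - a < w; omega
    · show lN a t < w
      have := hlN a t; omega
    · show 0 < w; omega
    · show 2 * M + 2 * (t + 1) < w; omega
    · show 2 * M + 2 * t + 3 < w; omega
  have hfi : Function.Injective f := by
    rintro (⟨a, (_ | t)⟩ | ((_ | t) | t)) (⟨b, (_ | u)⟩ | ((_ | u) | u)) h
    · change κ - a.1 = κ - b.1 at h
      have : a = b := Fin.ext (by omega)
      rw [this]
    · change κ - a.1 = lN b u at h
      have := hlN' b u; omega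
    · change κ - a.1 = 0 at h; omega
    · change κ - a.1 = 2 * M + 2 * (u + 1) at h; omega
    · change κ - a.1 = 2 * M + 2 * u + 3 at h; omega
    · change lN a t = κ - b.1 at h
      have := hlN' a t; omega
    · change κ + a.1 * (2 * n - 1) + 2 * (t.1 + 1) = κ + b.1 * (2 * n - 1) + 2 * (u.1 + 1) at h
      have h' : (a.1 : ℤ) * (2 * n - 1) + 2 * t.1 = b.1 * (2 * n - 1) + 2 * u.1 := by
        zify [show 1 ≤ 2 * n by omega] at h
        linarith
      obtain ⟨h1, h2⟩ := odd_aux1 h' (by omega) (by omega) (by omega) (by omega) (by omega)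
      have h1 : a = b := Fin.ext (by omega)
      have h2 : t = u := Fin.ext (by omega)
      rw [h1, h2]
    · change lN a t = 0 at h
      have := hlN' a t; omega
    · change lN a t = 2 * M + 2 * (u + 1) at h
      have := hlN a t; omega
    · change lN a t = 2 * M + 2 * u + 3 at h
      have := hlN a t; omega
    · change 0 = κ - b.1 at h; omega
    · change 0 = lN b u at h
      have := hlN' b u; omega
    · rfl
    · change 0 = 2 * M + 2 * (u.1 + 1) at h; omega
    · change 0 = 2 * M + 2 * u.1 + 3 at h; omega
    · change 2 * M + 2 * (t.1 + 1) = κ - b.1 at h; omega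
    · change 2 * M + 2 * (t.1 + 1) = lN b u at h
      have := hlN b u; omega
    · change 2 * M + 2 * (t.1 + 1) = 0 at h; omega
    · change 2 * M + 2 * (t.1 + 1) = 2 * M + 2 * (u.1 + 1) at h
      have : t = u := Fin.ext (by omega)
      rw [this]
    · change 2 * M + 2 * (t.1 + 1) = 2 * M + 2 * u.1 + 3 at h; omega
    · change 2 * M + 2 * t.1 + 3 = κ - b.1 at h; omega
    · change 2 * M + 2 * t.1 + 3 = lN b u at h
      have := hlN b u; omega
    · change 2 * M + 2 * t.1 + 3 = 0 at h; omega
    · change 2 * M + 2 * t.1 + 3 = 2 * M + 2 * (u.1 + 1) at h; omega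
    · change 2 * M + 2 * t.1 + 3 = 2 * M + 2 * u.1 + 3 at h
      have : t = u := Fin.ext (by omega)
      rw [this]
  have hslot : ∀ p, oddSlot (G := ZMod w) (fun a => (cN a : ZMod w)) (fun a t => (lN a t : ZMod w))
      (fun t => (sN t : ZMod w)) (fun t => (eN t : ZMod w)) p = (f p : ZMod w) := by
    rintro (⟨a, (_ | t)⟩ | ((_ | t) | t))
    · rfl
    · rfl
    · show (0 : ZMod w) = ((0 : ℕ) : ZMod w); simp
    · rfl
    · rfl
  refine urd_odd_abs (G := ZMod w) e n κ v s hn (by rw [ZMod.card, hw]) (by rw [ZMod.card, hvw, hw])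
    hcount (by rw [ZMod.card, hs, hw]) (fun a => (cN a : ZMod w)) (fun a t => (lN a t : ZMod w))
      (fun t => (sN t : ZMod w)) (fun t => (eN t : ZMod w)) ?_ ?_ ?_ ?_
  · intro p q h
    rw [hslot, hslot] at h
    exact hfi (zmod_cast_inj (hf p) (hf q) h)
  · intro ξ η h
    have e1 : (ξ.val : ZMod w) = ξ := ZMod.natCast_zmod_val _
    have e2 : (η.val : ZMod w) = η := ZMod.natCast_zmod_val _
    have l1 := ZMod.val_lt ξ
    have l2 := ZMod.val_lt η
    rw [← e1, ← e2, ← Nat.cast_add, ← Nat.cast_add] at h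
    obtain ⟨q, hq⟩ := zmod_natCast_eq_add h
    push_cast at hq
    have q1 : q < 2 := by by_contra hh; nlinarith
    have q2 : -2 < q := by by_contra hh; nlinarith
    have : q = -1 ∨ q = 0 ∨ q = 1 := by omega
    have : ξ.val = η.val := by
      rcases this with rfl | rfl | rfl <;> omega
    rw [← e1, ← e2, this]
  · intro ξ t hξ h
    have e1 : (ξ.val : ZMod w) = ξ := ZMod.natCast_zmod_val _
    have l1 := ZMod.val_lt ξ
    have hb : ξ.val ≤ 2 * M + 1 := by
      by_contra hlt
      apply hξ
      rcases Nat.even_or_odd' (ξ.val - (2 * M + 2)) with ⟨c, hc | hc⟩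
      · refine ⟨.inr (.inl (some ⟨c, by omega⟩)), ?_⟩
        rw [hslot]
        refine Eq.trans (congrArg Nat.cast ?_) e1
        show 2 * M + 2 * (c + 1) = ξ.val
        omega
      · refine ⟨.inr (.inr ⟨c, by omega⟩), ?_⟩
        rw [hslot]
        refine Eq.trans (congrArg Nat.cast ?_) e1
        show 2 * M + 2 * c + 3 = ξ.val
        omega
    rw [← e1, ← Nat.cast_add] at h
    obtain ⟨q, hq⟩ := zmod_natCast_eq_add h
    have ht := t.2
    simp only [eN] at hq
    push_cast at hq
    have q1 : q < 2 := by by_contra hh; nlinarith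
    have q2 : -1 < q := by by_contra hh; nlinarith
    have : q = 0 ∨ q = 1 := by omega
    rcases this with rfl | rfl <;> omega
  · intro δ hδ
    have hv : (δ.val : ZMod w) = δ := ZMod.natCast_zmod_val _
    have hv0 : δ.val ≠ 0 := by simpa using hδ
    have hlt := ZMod.val_lt δ
    have key : ∀ d : ℕ, 1 ≤ d → d ≤ M + e + 1 → (∃ a t, lN a t = cN a + 2 * d) ∨ ∃ t, sN t = 2 * d := by
      intro d h1 h2
      by_cases h3 : d ≤ M
      · left
        have hlt : (d - 1) / n < κ := by
          rw [Nat.div_lt_iff_lt_mul (by omega), mul_comm, ← hM]; omega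
        refine ⟨⟨(d - 1) / n, hlt⟩, ⟨(d - 1) % n, Nat.mod_lt _ (by omega)⟩, ?_⟩
        have h4 := Nat.div_add_mod' (d - 1) n
        show κ + (d - 1) / n * (2 * n - 1) + 2 * ((d - 1) % n + 1) = κ - (d - 1) / n + 2 * d
        generalize (d - 1) / n = a at *
        have h5 : a * (2 * n - 1) + a = 2 * (a * n) := by
          have : a * (2 * n - 1) + a = a * (2 * n - 1 + 1) := by ring
          rw [this, Nat.sub_add_cancel (by omega)]; ring
        omega
      · right
        refine ⟨⟨d - M - 1, by omega⟩, ?_⟩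
        show 2 * M + 2 * (d - M - 1 + 1) = 2 * d
        omega
    rcases Nat.even_or_odd' δ.val with ⟨d, hd | hd⟩
    · rcases key d (by omega) (by omega) with ⟨a, t, h⟩ | ⟨t, h⟩
      · refine Or.inl ⟨a, t, Or.inl ?_⟩
        simp only [h]
        rw [Nat.cast_add, ← hd, hv]
      · refine Or.inr ⟨t, Or.inl ?_⟩
        simp only [h]
        rw [← hd, hv]
    · have h2d : 2 * (M + e + 1 - d) = w - δ.val := by omega
      rcases key (M + e + 1 - d) (by omega) (by omega) with ⟨a, t, h⟩ | ⟨t, h⟩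
      · refine Or.inl ⟨a, t, Or.inr ?_⟩
        simp only [h]
        rw [Nat.cast_add, h2d, Nat.cast_sub hlt.le, hv]; simp [sub_eq_add_neg]
      · refine Or.inr ⟨t, Or.inr ?_⟩
        simp only [h]
        rw [h2d, Nat.cast_sub hlt.le, hv]; simp

lemma urd_zero (n v s : ℕ) (hv : v = 2 * (n + 1))
    (hcount : 2 * n * s = (v - 2) * (n + 1)) (hs : s = n + 1) : IsURD n v 1 s := by
  let c : ∀ _ : Fin (n + 1), ZMod 2 → Fin (n + 1) × ZMod 2 := fun j y => (j, y)
  let l : ∀ _ : Fin (n + 1), ZMod 2 → Fin n → Fin (n + 1) × ZMod 2 := fun j y t =>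
    (j.succAbove t, if j < j.succAbove t then y else y + 1)
  have h11 : ∀ y : ZMod 2, y + 1 + 1 = y := by decide
  have hne1 : ∀ y : ZMod 2, y + 1 ≠ y := by decide
  have hd : ∀ y z : ZMod 2, y = z ∨ y + 1 = z := by decide
  have hcov1 : ∀ (i j : Fin (n + 1)) (y z : ZMod 2), i < j →
      ∃ k st t, (c k st = (i, y) ∧ l k st t = (j, z)) ∨ (c k st = (j, z) ∧ l k st t = (i, y)) := by
    intro i j y z hij
    rcases hd y z with h | h
    · obtain ⟨t', ht'⟩ := Fin.exists_succAbove_eq hij.ne'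
      refine ⟨i, y, t', Or.inl ⟨rfl, ?_⟩⟩
      simp only [l, ht', hij, if_true, h]
    · obtain ⟨t', ht'⟩ := Fin.exists_succAbove_eq hij.ne
      refine ⟨j, z, t', Or.inr ⟨rfl, ?_⟩⟩
      simp only [l, ht', hij.not_gt, if_false, ← h, h11]
  refine urd_of (V := Fin (n + 1) × ZMod 2) (I := Fin (n + 1)) n v s (by omega)
    (by simp [hv, mul_comm]) (by simp [hs]) hcount (fun p => (p.1, p.2 + 1))
    (fun p => by simp [h11]) (fun p h => hne1 p.2 (congrArg Prod.snd h))
    (fun _ => ZMod 2) c l (fun i => by simp [hv]) ?_ ?_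
  · rintro j ⟨i, y⟩
    by_cases hij : i = j
    · subst hij
      exact ⟨(y, none), rfl⟩
    · obtain ⟨t', ht'⟩ := Fin.exists_succAbove_eq hij
      by_cases hlt : j < i
      · refine ⟨(y, some t'), ?_⟩
        show (j.succAbove t', if j < j.succAbove t' then _ else _) = (i, y)
        simp [ht', hlt]
      · refine ⟨(y + 1, some t'), ?_⟩
        show (j.succAbove t', if j < j.succAbove t' then _ else _) = (i, y)
        simp [ht', hlt, h11]
  · rintro ⟨i, y⟩ ⟨j, z⟩ hne
    rcases lt_trichotomy i j with h | h | h
    · exact Or.inr (hcov1 i j y z h)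
    · subst h
      left
      rcases hd y z with h | h
      · exact absurd (by rw [h]) hne
      · simp [h]
    · obtain ⟨k, st, t, h⟩ := hcov1 j i z y h
      exact Or.inr ⟨k, st, t, h.symm⟩

/-- For odd `n ≥ 3` and `v = n(n+1)k' + 2(n+1)` with `k' ≥ 0`, a
`(K_2, K_{1,n})`-URD`(v; 1, s)` exists, where `s = (v-2)(n+1)/(2n)`. -/
theorem urd_exists (n : ℕ) (hn : 3 ≤ n) (hodd : Odd n) (k' v : ℕ)
    (hv : v = n * (n + 1) * k' + 2 * (n + 1))
    (s : ℕ) (hs : 2 * n * s = (v - 2) * (n + 1)) :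
    IsURD n v 1 s := by
  have hv2 : v - 2 = n * (n + 1) * k' + 2 * n := by omega
  have hs0 := hs
  rw [hv2] at hs
  have h2n : 0 < 2 * n := by omega
  obtain ⟨e, he⟩ := hodd
  rcases Nat.even_or_odd' k' with ⟨κ, hk | hk⟩
  · rcases Nat.eq_zero_or_pos κ with h0 | h0
    · subst h0
      refine urd_zero n v s (by rw [hv, hk]; ring) hs0 ?_
      apply Nat.eq_of_mul_eq_mul_left h2n
      rw [hs, hk]; ring
    · refine urd_even n κ v s hn h0 (by rw [hv, hk]; ring) hs0 ?_
      apply Nat.eq_of_mul_eq_mul_left h2n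
      obtain ⟨k, rfl⟩ : ∃ k, κ = k + 1 := ⟨κ - 1, by omega⟩
      rw [hs, hk, Nat.add_sub_cancel]; ring
  · refine urd_odd e n κ v s (by omega) he (by rw [hv, hk]; ring) hs0 ?_
    apply Nat.eq_of_mul_eq_mul_left h2n
    rw [hs, hk, he]; ring
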